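/- Let Y be a Banach space over ℝ such that for every Banach space Z over ℝ the pair (Z,Y) has the Bishop–Phelps–Bollobás property (that is, Y is a universal BPB range space). Then there exists a single function η_Y : (0,1) → (0,∞) such that for every Banach space X over ℝ, the pair (X,Y) has the Bishop–Phelps–Bollobás property with the function η_Y. -/

import Mathlib

/-!
If no single `δ` served a given `ε` for all spaces, there would be spaces `X n` on which
`δ = 1 / (n + 1)` fails. Their `ℓ₁`-sum has the Bishop–Phelps–Bollobás property with some `δ > 0`
at `ε`, and each `X n` inherits that `δ` as an `ℓ₁`-summand, a contradiction for large `n`. To pass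
from the sum to a summand `X`, precompose `T₀` with the projection onto `X`: if an operator attains
its norm at `z`, then it attains its norm at the (nonzero) `X`-component of `z`, and normalizing
that component costs no more than the norm of the discarded one.
-/

open scoped ENNReal

/-- A pair `(X, Y)` of normed spaces has the Bishop–Phelps–Bollobás property with the
function `η : (0,1) → (0,∞)` (encoded as `η : ℝ → ℝ`, relevant only on `(0,1)`). -/
def BPBpWith (X Y : Type*) [NormedAddCommGroup X] [NormedSpace ℝ X]
    [NormedAddCommGroup Y] [NormedSpace ℝ Y] (η : ℝ → ℝ) : Prop :=
  ∀ ε ∈ Set.Ioo (0 : ℝ) 1, ∀ (T₀ : X →L[ℝ] Y) (x₀ : X),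
    ‖T₀‖ = 1 → ‖x₀‖ = 1 → 1 - η ε < ‖T₀ x₀‖ →
      ∃ (S : X →L[ℝ] Y) (x : X),
        ‖x‖ = 1 ∧ ‖S‖ = 1 ∧ ‖S x‖ = 1 ∧ ‖x - x₀‖ < ε ∧ ‖S - T₀‖ < ε

/-- The pair `(X, Y)` has the Bishop–Phelps–Bollobás property. -/
def HasBPBp (X Y : Type*) [NormedAddCommGroup X] [NormedSpace ℝ X]
    [NormedAddCommGroup Y] [NormedSpace ℝ Y] : Prop :=
  ∃ η : ℝ → ℝ, (∀ ε ∈ Set.Ioo (0 : ℝ) 1, 0 < η ε) ∧ BPBpWith X Y η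

/-- The Bishop–Phelps–Bollobás property of `(X, Y)` at a fixed accuracy `ε`, with `δ` in the role of
`η ε`. -/
def BPBpAt (X Y : Type*) [NormedAddCommGroup X] [NormedSpace ℝ X]
    [NormedAddCommGroup Y] [NormedSpace ℝ Y] (ε δ : ℝ) : Prop :=
  ∀ (T₀ : X →L[ℝ] Y) (x₀ : X), ‖T₀‖ = 1 → ‖x₀‖ = 1 → 1 - δ < ‖T₀ x₀‖ →
    ∃ (S : X →L[ℝ] Y) (x : X),
      ‖x‖ = 1 ∧ ‖S‖ = 1 ∧ ‖S x‖ = 1 ∧ ‖x - x₀‖ < ε ∧ ‖S - T₀‖ < ε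

theorem BPBpAt.anti {X Y : Type*} [NormedAddCommGroup X] [NormedSpace ℝ X]
    [NormedAddCommGroup Y] [NormedSpace ℝ Y] {ε δ δ' : ℝ} (h : BPBpAt X Y ε δ) (hδ : δ' ≤ δ) :
    BPBpAt X Y ε δ' :=
  fun T₀ x₀ hT₀ hx₀ hTx₀ => h T₀ x₀ hT₀ hx₀ (by linarith)

/-- `X` as an `ℓ₁`-summand of `Z`: an isometric embedding together with the projection of an
`ℓ₁`-decomposition of `Z` onto its range. The projection is recorded with values in `X`. -/
structure L1Summand (X Z : Type*) [NormedAddCommGroup X] [NormedSpace ℝ X]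
    [NormedAddCommGroup Z] [NormedSpace ℝ Z] where
  incl : X →ₗᵢ[ℝ] Z
  proj : Z →L[ℝ] X
  proj_incl (x : X) : proj (incl x) = x
  norm_add_norm_sub (z : Z) : ‖proj z‖ + ‖z - incl (proj z)‖ = ‖z‖

theorem norm_map_left_eq_of_norm_map_add_eq {𝕜 E F : Type*} [NontriviallyNormedField 𝕜]
    [SeminormedAddCommGroup E] [NormedSpace 𝕜 E] [SeminormedAddCommGroup F] [NormedSpace 𝕜 F]
    (S : E →L[𝕜] F) {a b : E} (hab : ‖a + b‖ = ‖a‖ + ‖b‖) (hS : ‖S (a + b)‖ = ‖S‖ * ‖a + b‖) :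
    ‖S a‖ = ‖S‖ * ‖a‖ := by
  refine le_antisymm (S.le_opNorm a) ?_
  have hadd : ‖S (a + b)‖ ≤ ‖S a‖ + ‖S b‖ := by
    rw [map_add]
    exact norm_add_le _ _
  rw [hS, hab, mul_add] at hadd
  linarith [S.le_opNorm b]

theorem norm_normalize_sub_self {E : Type*} [NormedAddCommGroup E] [NormedSpace ℝ E] {u : E}
    (hu : u ≠ 0) : ‖NormedSpace.normalize u - u‖ = |1 - ‖u‖| := by
  calc ‖NormedSpace.normalize u - u‖
      = ‖(1 - ‖u‖) • NormedSpace.normalize u‖ := by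
        rw [sub_smul, one_smul, NormedSpace.norm_smul_normalize]
    _ = |1 - ‖u‖| := by
        rw [norm_smul, NormedSpace.norm_normalize hu, mul_one, Real.norm_eq_abs]

namespace L1Summand

section

variable {X Y Z : Type*} [NormedAddCommGroup X] [NormedSpace ℝ X]
  [NormedAddCommGroup Y] [NormedSpace ℝ Y] [NormedAddCommGroup Z] [NormedSpace ℝ Z]
  (s : L1Summand X Z)

theorem norm_proj_le (z : Z) : ‖s.proj z‖ ≤ ‖z‖ := by
  linarith [s.norm_add_norm_sub z, norm_nonneg (z - s.incl (s.proj z))]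

theorem norm_comp_incl_le (S : Z →L[ℝ] Y) :
    ‖S ∘L s.incl.toContinuousLinearMap‖ ≤ ‖S‖ :=
  ContinuousLinearMap.opNorm_le_bound _ (norm_nonneg S) fun x => by
    rw [← s.incl.norm_map]
    exact S.le_opNorm (s.incl x)

theorem comp_proj_comp_incl (T : X →L[ℝ] Y) :
    (T ∘L s.proj) ∘L s.incl.toContinuousLinearMap = T :=
  ContinuousLinearMap.ext fun x => congrArg T (s.proj_incl x)

theorem norm_comp_proj (T : X →L[ℝ] Y) : ‖T ∘L s.proj‖ = ‖T‖ := by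
  apply le_antisymm
  · exact ContinuousLinearMap.opNorm_le_bound _ (norm_nonneg T) fun z =>
      T.le_opNorm_of_le (s.norm_proj_le z)
  · simpa only [s.comp_proj_comp_incl] using s.norm_comp_incl_le (T ∘L s.proj)

theorem norm_map_incl_proj_of_norm_map_eq (S : Z →L[ℝ] Y) {z : Z} (hz : ‖S z‖ = ‖S‖ * ‖z‖) :
    ‖S (s.incl (s.proj z))‖ = ‖S‖ * ‖s.proj z‖ := by
  rw [← s.incl.norm_map]
  apply norm_map_left_eq_of_norm_map_add_eq S (b := z - s.incl (s.proj z))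
  · rw [add_sub_cancel, s.incl.norm_map, s.norm_add_norm_sub]
  · rwa [add_sub_cancel]

theorem norm_proj_sub_add_norm_sub (z : Z) (x : X) :
    ‖s.proj z - x‖ + ‖z - s.incl (s.proj z)‖ = ‖z - s.incl x‖ := by
  simpa only [map_sub, s.proj_incl, sub_sub_sub_cancel_right]
    using s.norm_add_norm_sub (z - s.incl x)

theorem norm_normalize_proj_sub_le {z : Z} (hz : ‖z‖ = 1) (hproj : s.proj z ≠ 0) (x : X) :
    ‖NormedSpace.normalize (s.proj z) - x‖ ≤ ‖z - s.incl x‖ := by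
  calc ‖NormedSpace.normalize (s.proj z) - x‖
      ≤ ‖NormedSpace.normalize (s.proj z) - s.proj z‖ + ‖s.proj z - x‖ :=
        norm_sub_le_norm_sub_add_norm_sub _ _ _
    _ = ‖z - s.incl (s.proj z)‖ + ‖s.proj z - x‖ := by
        rw [norm_normalize_sub_self hproj, ← hz, ← s.norm_add_norm_sub z, add_sub_cancel_left,
          abs_norm]
    _ = ‖z - s.incl x‖ := by rw [add_comm, s.norm_proj_sub_add_norm_sub]

theorem proj_ne_zero_of_norm_sub_lt {z : Z} {x : X} (h : ‖z - s.incl x‖ < ‖x‖) :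
    s.proj z ≠ 0 := by
  intro hproj
  have hsum := s.norm_proj_sub_add_norm_sub z x
  rw [hproj, zero_sub, norm_neg] at hsum
  linarith [norm_nonneg (z - s.incl 0)]

end

/-- Each coordinate space `E i` as an `ℓ₁`-summand of the `ℓ₁`-sum of the family `E`. -/
noncomputable def ofLpOne {ι : Type*} [DecidableEq ι] (E : ι → Type*)
    [∀ i, NormedAddCommGroup (E i)] [∀ i, NormedSpace ℝ (E i)] (i : ι) :
    L1Summand (E i) (lp E 1) where
  incl := ⟨lp.lsingle 1 i, lp.norm_single one_pos i⟩
  proj := lp.evalCLM ℝ E 1 i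
  proj_incl := lp.single_apply_self 1 i
  norm_add_norm_sub z := by
    have hcompl := lp.norm_compl_sum_single (p := 1) (by norm_num) z {i}
    simp only [ENNReal.toReal_one, Real.rpow_one, Finset.sum_singleton] at hcompl
    exact add_eq_of_eq_sub' hcompl

end L1Summand

theorem BPBpAt.of_l1Summand {X Y Z : Type*} [NormedAddCommGroup X] [NormedSpace ℝ X]
    [NormedAddCommGroup Y] [NormedSpace ℝ Y] [NormedAddCommGroup Z] [NormedSpace ℝ Z]
    {ε δ : ℝ} (h : BPBpAt Z Y ε δ) (s : L1Summand X Z) (hε : ε ≤ 1) : BPBpAt X Y ε δ := by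
  intro T₀ x₀ hT₀ hx₀ hTx₀
  obtain ⟨S, z, hz, hS, hSz, hzx₀, hST₀⟩ :=
    h (T₀ ∘L s.proj) (s.incl x₀) (by rw [s.norm_comp_proj, hT₀]) (by rw [s.incl.norm_map, hx₀])
      (by rwa [ContinuousLinearMap.comp_apply, s.proj_incl])
  have hproj : s.proj z ≠ 0 := s.proj_ne_zero_of_norm_sub_lt (by linarith)
  have hattain : ‖S (s.incl (s.proj z))‖ = ‖s.proj z‖ := by
    rw [s.norm_map_incl_proj_of_norm_map_eq S (by rw [hSz, hS, hz, mul_one]), hS, one_mul]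
  set S' := S ∘L s.incl.toContinuousLinearMap
  set x := NormedSpace.normalize (s.proj z) with hx
  have hx_norm : ‖x‖ = 1 := NormedSpace.norm_normalize hproj
  have hS'x : ‖S' x‖ = 1 := by
    calc ‖S' x‖ = ‖s.proj z‖⁻¹ * ‖S (s.incl (s.proj z))‖ := by
          rw [hx, NormedSpace.normalize, map_smul, norm_smul, norm_inv, norm_norm]
          rfl
      _ = 1 := by rw [hattain, inv_mul_cancel₀ (norm_ne_zero_iff.mpr hproj)]
  have hS'_norm : ‖S'‖ = 1 := by
    apply le_antisymm (hS ▸ s.norm_comp_incl_le S)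
    simpa only [hS'x] using S'.unit_le_opNorm x hx_norm.le
  have hclose : ‖S' - T₀‖ ≤ ‖S - T₀ ∘L s.proj‖ := by
    simpa only [ContinuousLinearMap.sub_comp, s.comp_proj_comp_incl]
      using s.norm_comp_incl_le (S - T₀ ∘L s.proj)
  exact ⟨S', x, hx_norm, hS'_norm, hS'x,
    (s.norm_normalize_proj_sub_le hz hproj x₀).trans_lt hzx₀, hclose.trans_lt hST₀⟩

theorem exists_uniform_bpbpAt.{u, v} (Y : Type v) [NormedAddCommGroup Y] [NormedSpace ℝ Y]
    (C : ∀ (Z : Type u) [NormedAddCommGroup Z] [NormedSpace ℝ Z], Prop)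
    (hC : ∀ (X : ℕ → Type u) [∀ n, NormedAddCommGroup (X n)] [∀ n, NormedSpace ℝ (X n)],
      (∀ n, C (X n)) → C (lp X 1))
    {ε : ℝ} (hε : ε ≤ 1)
    (h : ∀ (Z : Type u) [NormedAddCommGroup Z] [NormedSpace ℝ Z], C Z →
      ∃ δ > 0, BPBpAt Z Y ε δ) :
    ∃ δ > 0, ∀ (X : Type u) [NormedAddCommGroup X] [NormedSpace ℝ X], C X → BPBpAt X Y ε δ := by
  by_contra! hfail
  choose X normX spaceX hCX hX using fun n : ℕ => hfail (1 / (n + 1)) Nat.one_div_pos_of_nat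
  obtain ⟨δ, hδ, hsum⟩ := h (lp X 1) (hC X hCX)
  obtain ⟨n, hn⟩ := exists_nat_one_div_lt hδ
  exact hX n ((hsum.of_l1Summand (L1Summand.ofLpOne X n) hε).anti hn.le)

theorem universal_BPB_range_has_universal_eta_general.{u, v} (Y : Type v)
    [NormedAddCommGroup Y] [NormedSpace ℝ Y]
    (C : ∀ (Z : Type u) [NormedAddCommGroup Z] [NormedSpace ℝ Z], Prop)
    (hC : ∀ (X : ℕ → Type u) [∀ n, NormedAddCommGroup (X n)] [∀ n, NormedSpace ℝ (X n)],
      (∀ n, C (X n)) → C (lp X 1))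
    (h : ∀ (Z : Type u) [NormedAddCommGroup Z] [NormedSpace ℝ Z], C Z → HasBPBp Z Y) :
    ∃ ηY : ℝ → ℝ, (∀ ε ∈ Set.Ioo (0 : ℝ) 1, 0 < ηY ε) ∧
      ∀ (X : Type u) [NormedAddCommGroup X] [NormedSpace ℝ X], C X → BPBpWith X Y ηY := by
  have huniform : ∀ ε ∈ Set.Ioo (0 : ℝ) 1, ∃ δ > 0,
      ∀ (X : Type u) [NormedAddCommGroup X] [NormedSpace ℝ X], C X → BPBpAt X Y ε δ := by
    refine fun ε hε => exists_uniform_bpbpAt Y C hC hε.2.le fun Z _ _ hZ => ?_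
    obtain ⟨η, hη, hBPB⟩ := h Z hZ
    exact ⟨η ε, hη ε hε, hBPB ε hε⟩
  choose! ηY hηY hBPB using huniform
  exact ⟨ηY, hηY, fun X _ _ hX ε hε => hBPB ε hε X hX⟩

/-- If `Y` is a universal BPB range space, then there is a single function `η_Y` witnessing
the Bishop–Phelps–Bollobás property of `(X, Y)` for every Banach space `X`. -/
theorem universal_BPB_range_has_universal_eta.{u} (Y : Type u)
    [NormedAddCommGroup Y] [NormedSpace ℝ Y] [CompleteSpace Y]
    (h : ∀ (Z : Type u) [NormedAddCommGroup Z] [NormedSpace ℝ Z] [CompleteSpace Z],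
      HasBPBp Z Y) :
    ∃ ηY : ℝ → ℝ, (∀ ε ∈ Set.Ioo (0 : ℝ) 1, 0 < ηY ε) ∧
      ∀ (X : Type u) [NormedAddCommGroup X] [NormedSpace ℝ X] [CompleteSpace X],
        BPBpWith X Y ηY := by
  exact universal_BPB_range_has_universal_eta_general Y (fun Z _ _ => CompleteSpace Z)
    (fun _ _ _ _ => inferInstance) fun Z _ _ _ => h Z
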